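/- Let p : ℝ^d → ℝ be a continuously differentiable probability density with p(x) > 0 for all x, and let f : ℝ^d → ℝ^d be a continuously differentiable vector field. Assume that x ↦ p(x) * ⟨f(x), ∇(log ∘ p)(x)⟩ and x ↦ p(x) * div f(x) are integrable and that ∫ div(fun x => p(x) • f(x)) dx = 0. Then ∫ p(x) * ⟨f(x), ∇(log ∘ p)(x)⟩ dx = − ∫ p(x) * div f(x) dx (Stein's identity). -/

import Mathlib

open MeasureTheory Real
open scoped RealInnerProductSpace

/-- Divergence of a vector field on Euclidean space: trace of the Fréchet derivative. -/
noncomputable def vdiv {d : ℕ} (v : EuclideanSpace ℝ (Fin d) → EuclideanSpace ℝ (Fin d))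
    (x : EuclideanSpace ℝ (Fin d)) : ℝ :=
  LinearMap.trace ℝ (EuclideanSpace ℝ (Fin d)) (fderiv ℝ v x)

/-- Laplacian on Euclidean space: divergence of the gradient. -/
noncomputable def lap {d : ℕ} (f : EuclideanSpace ℝ (Fin d) → ℝ) :
    EuclideanSpace ℝ (Fin d) → ℝ :=
  vdiv (gradient f)

/-! Since `p ∇(log p) = ∇p`, the product rule reads `div (p f) = p ⟪f, ∇(log p)⟫ + p div f`
wherever `p` does not vanish; integrate this pointwise identity. -/

section Divergence

variable {𝕜 E : Type*} [NontriviallyNormedField 𝕜] [NormedAddCommGroup E] [NormedSpace 𝕜 E]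

variable (𝕜) in
/-- The divergence of a vector field on a normed space, as the trace of its Fréchet derivative.
It extends `vdiv`, with which it agrees definitionally, beyond Euclidean space; the trace is the
junk value `0` when `E` is not finite-dimensional. -/
noncomputable def divergence (v : E → E) (x : E) : 𝕜 :=
  LinearMap.trace 𝕜 E (fderiv 𝕜 v x)

theorem divergence_fun_smul [FiniteDimensional 𝕜 E] {c : E → 𝕜} {v : E → E} {x : E}
    (hc : DifferentiableAt 𝕜 c x) (hv : DifferentiableAt 𝕜 v x) :
    divergence 𝕜 (fun y => c y • v y) x = fderiv 𝕜 c x (v x) + c x * divergence 𝕜 v x :=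
  calc divergence 𝕜 (fun y => c y • v y) x
      = LinearMap.trace 𝕜 E
          (c x • (fderiv 𝕜 v x : E →ₗ[𝕜] E) +
            (fderiv 𝕜 c x : E →ₗ[𝕜] 𝕜).smulRight (v x)) :=
        congrArg (fun L : E →L[𝕜] E => LinearMap.trace 𝕜 E L) (fderiv_fun_smul hc hv)
    _ = fderiv 𝕜 c x (v x) + c x * divergence 𝕜 v x := by
        rw [map_add, map_smul, LinearMap.trace_smulRight, add_comm]
        rfl

end Divergence

section LogGradient

variable {E : Type*} [NormedAddCommGroup E] [InnerProductSpace ℝ E] [CompleteSpace E]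
  {p : E → ℝ} {x : E}

theorem hasGradientAt_log_comp {p' : E} (hp : HasGradientAt p p' x) (hx : p x ≠ 0) :
    HasGradientAt (log ∘ p) ((p x)⁻¹ • p') x := by
  rw [hasGradientAt_iff_hasFDerivAt, map_smul]
  exact hp.hasFDerivAt.log hx

theorem mul_inner_gradient_log_comp (hp : DifferentiableAt ℝ p x) (hx : p x ≠ 0) (v : E) :
    p x * ⟪v, gradient (log ∘ p) x⟫ = fderiv ℝ p x v := by
  rw [(hasGradientAt_log_comp hp.hasGradientAt hx).gradient, real_inner_smul_right,
    mul_inv_cancel_left₀ hx, real_inner_comm, inner_gradient_left]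

theorem divergence_fun_smul_eq_mul_inner_gradient_log [FiniteDimensional ℝ E]
    {f : E → E} (hp : DifferentiableAt ℝ p x) (hx : p x ≠ 0) (hf : DifferentiableAt ℝ f x) :
    divergence ℝ (fun y => p y • f y) x =
      p x * ⟪f x, gradient (log ∘ p) x⟫ + p x * divergence ℝ f x := by
  rw [divergence_fun_smul hp hf, mul_inner_gradient_log_comp hp hx]

end LogGradient

theorem stein_identity_general {E : Type*} [NormedAddCommGroup E] [InnerProductSpace ℝ E]
    [FiniteDimensional ℝ E] [CompleteSpace E] [MeasurableSpace E] {μ : Measure E}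
    {p : E → ℝ} {f : E → E} (hp : ∀ᵐ x ∂μ, DifferentiableAt ℝ p x) (hpos : ∀ᵐ x ∂μ, 0 < p x)
    (hf : ∀ᵐ x ∂μ, DifferentiableAt ℝ f x)
    (hscore : Integrable (fun x => p x * ⟪f x, gradient (log ∘ p) x⟫) μ)
    (hdiv : Integrable (fun x => p x * divergence ℝ f x) μ)
    (hzero : ∫ x, divergence ℝ (fun y => p y • f y) x ∂μ = 0) :
    ∫ x, p x * ⟪f x, gradient (log ∘ p) x⟫ ∂μ = -∫ x, p x * divergence ℝ f x ∂μ := by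
  rw [eq_neg_iff_add_eq_zero, ← integral_add hscore hdiv, ← hzero]
  refine integral_congr_ae ?_
  filter_upwards [hp, hpos, hf] with x hpx hposx hfx
  exact (divergence_fun_smul_eq_mul_inner_gradient_log hpx hposx.ne' hfx).symm

/-- Stein's identity. For a positive C¹ probability density `p` and a C¹
vector field `f`, if `∫ div (p • f) = 0` and the integrands are integrable, then
`∫ p ⟨f, ∇ log p⟩ = − ∫ p (div f)`. -/
theorem stein_identity
    (d : ℕ) (p : EuclideanSpace ℝ (Fin d) → ℝ)
    (hp : ContDiff ℝ 1 p) (hpos : ∀ x, 0 < p x)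
    (hpInt : Integrable p) (hpOne : ∫ x, p x = 1)
    (f : EuclideanSpace ℝ (Fin d) → EuclideanSpace ℝ (Fin d)) (hf : ContDiff ℝ 1 f)
    (hInt1 : Integrable fun x => p x * ⟪f x, gradient (Real.log ∘ p) x⟫)
    (hInt2 : Integrable fun x => p x * vdiv f x)
    (hDiv : ∫ x, vdiv (fun x => p x • f x) x = 0) :
    ∫ x, p x * ⟪f x, gradient (Real.log ∘ p) x⟫ = -∫ x, p x * vdiv f x :=
  stein_identity_general (.of_forall (hp.differentiable one_ne_zero)) (.of_forall hpos)
    (.of_forall (hf.differentiable one_ne_zero)) hInt1 hInt2 hDiv
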